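/- arXiv:2308.11353 — 4 statements merged into one kernel-verified Lean document; each statement's English description precedes it below -/
import Mathlib

section
/- For every filtered cochain complex (K, d) of finite depth S over a field 𝕜 there exist subspaces T, P ⊆ K such that K is the internal direct sum K = T ⊕ d(T) ⊕ P, d(P) ⊆ P, for every j = 0, …, S one has d(K_j) ⊆ d(T) + K_{j+1}, and for every j = 0, …, S the linear map sending α ∈ T ∩ K_j to the class of dα in K_j/K_{j+1} has kernel exactly T ∩ K_{j+1} (equivalently, the induced map (T ∩ K_j)/(T ∩ K_{j+1}) → K_j/K_{j+1}, α ↦ dα mod K_{j+1}, is injective). -/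
/-- `A ⊕ B ⊕ C = K` as an internal direct sum: every element of `K` is uniquely
the sum of an element of `A`, an element of `B` and an element of `C`. -/
def IsInternalTriple {𝕜 K : Type*} [Field 𝕜] [AddCommGroup K] [Module 𝕜 K]
    (A B C : Submodule 𝕜 K) : Prop :=
  ∀ x : K, ∃! p : A × B × C, (p.1 : K) + (p.2.1 : K) + (p.2.2 : K) = x

/-!
Call `T` good if it lifts the coimage of the differential induced on the associated graded module.
A good `T` is built from the deepest step of the filtration upwards: to one that is good for
`F 1 ⊇ F 2 ⊇ ⋯`, add a complement `C` of `F 0 ⊓ d⁻¹ (F 1)` in `F 0`. By modularity, intersecting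
`T ⊔ C` with `F 0 ⊓ d⁻¹ (F 1)` gives back `T`, so the conditions deeper in the filtration survive.

Since the filtration is finite, `d` is injective on `T`; as `d` vanishes on `d T`, this gives
`T ⊓ d T = ⊥`, and so there is a map `h : K → T` which vanishes on `T` and inverts `d` on `d T`.
The chain map `d h + h d` is then a projection onto `T ⊕ d T`, and its kernel is the subcomplex
`P`.
-/

section DirectSum

variable {R M : Type*} [Ring R] [AddCommGroup M] [Module R M] {A B C : Submodule R M}

theorem existsUnique_add_add_eq_of_isCompl_sup (hAB : Disjoint A B) (hC : IsCompl (A ⊔ B) C)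
    (x : M) : ∃! p : A × B × C, (p.1 : M) + p.2.1 + p.2.2 = x := by
  let sum : A × B × C →ₗ[R] M := A.subtype.coprod (B.subtype.coprod C.subtype)
  have hABC : Disjoint A (B ⊔ C) := hAB.disjoint_sup_right_of_disjoint_sup_left hC.disjoint
  have hBC : Disjoint B C := hC.disjoint.mono_left le_sup_right
  have hker : LinearMap.ker sum = ⊥ := by
    rw [LinearMap.ker_coprod_of_disjoint_range _ _ (by simpa [LinearMap.range_coprod] using hABC),
      LinearMap.ker_coprod_of_disjoint_range _ _ (by simpa using hBC)]
    simp
  have hrange : LinearMap.range sum = ⊤ := by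
    simpa [sum, LinearMap.range_coprod, ← sup_assoc] using hC.sup_eq_top
  have hsum : Function.Bijective sum :=
    ⟨LinearMap.ker_eq_bot.mp hker, LinearMap.range_eq_top.mp hrange⟩
  simpa [sum, add_assoc] using hsum.existsUnique x

end DirectSum

section FilteredComplex

variable {R K : Type*} [Ring R] [AddCommGroup K] [Module R K]
  {d : Module.End R K} {T : Submodule R K}

theorem disjoint_map_of_disjoint_ker (hdd : d * d = 0) (hT : Disjoint T (LinearMap.ker d)) :
    Disjoint T (T.map d) :=
  hT.mono_right (LinearMap.map_le_range.trans (LinearMap.range_le_ker_iff.mpr hdd))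

theorem exists_contraction_of_disjoint_ker [IsSemisimpleModule R K] (hdd : d * d = 0)
    (hT : Disjoint T (LinearMap.ker d)) :
    ∃ h : K →ₗ[R] T, (∀ t : T, h t = 0) ∧ ∀ t : T, h (d t) = t := by
  let sum : T × T →ₗ[R] K := T.subtype.coprod (d ∘ₗ T.subtype)
  have hd : LinearMap.ker (d ∘ₗ T.subtype) = ⊥ := by
    rwa [LinearMap.ker_comp, ← Submodule.disjoint_iff_comap_eq_bot]
  have hsum : LinearMap.ker sum = ⊥ := by
    rw [LinearMap.ker_coprod_of_disjoint_range, hd, Submodule.ker_subtype, Submodule.prod_bot]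
    simpa [LinearMap.range_comp] using disjoint_map_of_disjoint_ker hdd hT
  obtain ⟨h, hh⟩ := IsSemisimpleModule.extension_property sum (LinearMap.ker_eq_bot.mp hsum)
    (LinearMap.snd R T T)
  exact ⟨h, fun t ↦ by simpa [sum] using LinearMap.congr_fun hh (t, 0),
    fun t ↦ by simpa [sum] using LinearMap.congr_fun hh (0, t)⟩

theorem isProj_sup_map_homotopy (hdd : d * d = 0) {h : K →ₗ[R] T} (hT : ∀ t : T, h t = 0)
    (hdT : ∀ t : T, h (d t) = t) :
    LinearMap.IsProj (T ⊔ T.map d) (d * (T.subtype ∘ₗ h) + (T.subtype ∘ₗ h) * d) where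
  map_mem x := by
    rw [sup_comm]
    exact Submodule.add_mem_sup (Submodule.mem_map_of_mem (h x).2) (h (d x)).2
  map_id x hx := by
    obtain ⟨t, ht, _, ⟨s, hs, rfl⟩, rfl⟩ := Submodule.mem_sup.mp hx
    have hdds : d (d s) = 0 := LinearMap.congr_fun hdd s
    lift t to T using ht
    lift s to T using hs
    simp [hT, hdT, hdds, add_comm]

theorem exists_invariant_isCompl [IsSemisimpleModule R K] (hdd : d * d = 0)
    (hT : Disjoint T (LinearMap.ker d)) :
    ∃ P ∈ d.invtSubmodule, IsCompl (T ⊔ T.map d) P := by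
  obtain ⟨h, hhT, hhdT⟩ := exists_contraction_of_disjoint_ker hdd hT
  let homotopy : Module.End R K := T.subtype ∘ₗ h
  let proj : Module.End R K := d * homotopy + homotopy * d
  have hcomm : proj * d = d * proj :=
    calc proj * d = d * homotopy * d := by
          simp only [proj, add_mul, mul_assoc, hdd, mul_zero, add_zero]
      _ = d * proj := by simp only [proj, mul_add, ← mul_assoc, hdd, zero_mul, zero_add]
  refine ⟨LinearMap.ker proj, fun x hx ↦ ?_, (isProj_sup_map_homotopy hdd hhT hhdT).isCompl⟩
  calc proj (d x) = d (proj x) := LinearMap.congr_fun hcomm x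
    _ = 0 := by rw [LinearMap.mem_ker.mp hx, map_zero]

variable {F : ℕ → Submodule R K}

/-- `T` is a lift of the coimage of the differential which `d` induces on the associated graded
module of the decreasing filtration `F`: modulo `F (i + 1)`, every element of `d (F i)` comes from
`T`, and `d` induces an injective map from `(T ⊓ F i) / (T ⊓ F (i + 1))` to `F i / F (i + 1)`.
Only `T ≤ F 0` is required, so that `F` need not start at the whole module and can be
shifted. -/
structure IsGradedCoimageLift (d : Module.End R K) (F : ℕ → Submodule R K) (T : Submodule R K) :
    Prop where
  le_zero : T ≤ F 0
  map_le (i : ℕ) : (F i).map d ≤ T.map d ⊔ F (i + 1)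
  inf_comap_le (i : ℕ) : T ⊓ (F i ⊓ (F (i + 1)).comap d) ≤ F (i + 1)

theorem isGradedCoimageLift_bot (hF : ∀ i, F i = ⊥) : IsGradedCoimageLift d F ⊥ where
  le_zero := bot_le
  map_le i := by simp [hF]
  inf_comap_le i := by simp

namespace IsGradedCoimageLift

theorem sup_of_shift (hF : Antitone F) (hd : F 1 ∈ d.invtSubmodule)
    (hT : IsGradedCoimageLift d (fun i ↦ F (i + 1)) T) {C : Submodule R K}
    (hdisj : Disjoint (F 0 ⊓ (F 1).comap d) C) (hsup : F 0 ⊓ (F 1).comap d ⊔ C = F 0) :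
    IsGradedCoimageLift d F (T ⊔ C) where
  le_zero := sup_le (hT.le_zero.trans (hF zero_le_one)) (hsup ▸ le_sup_right)
  map_le
    | 0 => by
      calc (F 0).map d = (F 0 ⊓ (F 1).comap d).map d ⊔ C.map d := by
            rw [← Submodule.map_sup, hsup]
        _ ≤ F 1 ⊔ (T ⊔ C).map d :=
            sup_le_sup (Submodule.map_le_iff_le_comap.mpr inf_le_right)
              (Submodule.map_mono le_sup_right)
        _ = (T ⊔ C).map d ⊔ F 1 := sup_comm _ _
    | i + 1 => (hT.map_le i).trans (sup_le_sup_right (Submodule.map_mono le_sup_left) _)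
  inf_comap_le := by
    have hT0 : T ≤ F 0 ⊓ (F 1).comap d :=
      le_inf (hT.le_zero.trans (hF zero_le_one)) (hT.le_zero.trans hd)
    have hmodular : (T ⊔ C) ⊓ (F 0 ⊓ (F 1).comap d) = T := by
      rw [sup_inf_assoc_of_le C hT0, hdisj.symm.eq_bot, sup_bot_eq]
    rintro (_ | i)
    · exact hmodular.trans_le hT.le_zero
    · have hmono : F (i + 1) ⊓ (F (i + 2)).comap d ≤ F 0 ⊓ (F 1).comap d :=
        inf_le_inf (hF (by lia)) (Submodule.comap_mono (hF (by lia)))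
      have hle : (T ⊔ C) ⊓ (F (i + 1) ⊓ (F (i + 2)).comap d) ≤ T :=
        (inf_le_inf_left _ hmono).trans_eq hmodular
      exact (le_inf hle inf_le_right).trans (hT.inf_comap_le i)

theorem disjoint_ker (hT : IsGradedCoimageLift d F T) {n : ℕ} (hn : F n = ⊥) :
    Disjoint T (LinearMap.ker d) := by
  have hle (i : ℕ) : T ⊓ LinearMap.ker d ≤ F i := by
    induction i with
    | zero => exact inf_le_left.trans hT.le_zero
    | succ i ih =>
      have hker : T ⊓ LinearMap.ker d ≤ (F (i + 1)).comap d :=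
        inf_le_right.trans (LinearMap.ker_le_comap d)
      exact (le_inf inf_le_left (le_inf ih hker)).trans (hT.inf_comap_le i)
  exact disjoint_iff_inf_le.mpr ((hle n).trans_eq hn)

end IsGradedCoimageLift

theorem exists_isGradedCoimageLift [IsSemisimpleModule R K] (hF : Antitone F)
    (hd : ∀ i, F i ∈ d.invtSubmodule) {n : ℕ} (hn : F n = ⊥) :
    ∃ T, IsGradedCoimageLift d F T := by
  induction n generalizing F with
  | zero => exact ⟨⊥, isGradedCoimageLift_bot fun i ↦ eq_bot_mono (hF i.zero_le) hn⟩
  | succ n ih =>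
    obtain ⟨T, hT⟩ := ih (F := fun i ↦ F (i + 1)) (fun _ _ hij ↦ hF (Nat.succ_le_succ hij))
      (fun i ↦ hd (i + 1)) hn
    obtain ⟨C, hdisj, hsup⟩ :=
      IsModularLattice.exists_disjoint_and_sup_eq (inf_le_left : F 0 ⊓ (F 1).comap d ≤ F 0)
    exact ⟨T ⊔ C, hT.sup_of_shift hF (hd 1) hdisj hsup⟩

theorem statement0_general [IsSemisimpleModule R K] (hdd : d * d = 0) (hF : Antitone F)
    (hd : ∀ i, F i ∈ d.invtSubmodule) {n : ℕ} (hn : F n = ⊥) :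
    ∃ T P : Submodule R K,
      Disjoint T (T.map d) ∧ IsCompl (T ⊔ T.map d) P ∧
      P ∈ d.invtSubmodule ∧
      (∀ i, (F i).map d ≤ T.map d ⊔ F (i + 1)) ∧
      ∀ i, ∀ α ∈ T, α ∈ F i → (d α ∈ F (i + 1) ↔ α ∈ F (i + 1)) := by
  obtain ⟨T, hT⟩ := exists_isGradedCoimageLift hF hd hn
  have hker : Disjoint T (LinearMap.ker d) := hT.disjoint_ker hn
  obtain ⟨P, hP, hcompl⟩ := exists_invariant_isCompl hdd hker
  exact ⟨T, P, disjoint_map_of_disjoint_ker hdd hker, hcompl, hP, hT.map_le,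
    fun i α hα hαi ↦ ⟨fun hdα ↦ hT.inf_comap_le i ⟨hα, hαi, hdα⟩, fun h ↦ hd (i + 1) h⟩⟩

end FilteredComplex

theorem statement0
    {𝕜 K : Type*} [Field 𝕜] [AddCommGroup K] [Module 𝕜 K]
    (S : ℕ) (Kfil : ℕ → Submodule 𝕜 K) (d : Module.End 𝕜 K)
    (hdd : d * d = 0)
    (hK0 : Kfil 0 = ⊤)
    (hmono : ∀ j, Kfil (j + 1) ≤ Kfil j)
    (hbot : Kfil (S + 1) = ⊥)
    (hdK : ∀ j, ∀ x ∈ Kfil j, d x ∈ Kfil j)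
    :
    ∃ T P : Submodule 𝕜 K,
      IsInternalTriple T (Submodule.map d T) P ∧
      (∀ x ∈ P, d x ∈ P) ∧
      (∀ j ≤ S, ∀ x ∈ Kfil j, d x ∈ Submodule.map d T ⊔ Kfil (j + 1)) ∧
      (∀ j ≤ S, ∀ α ∈ T, α ∈ Kfil j → (d α ∈ Kfil (j + 1) ↔ α ∈ Kfil (j + 1))) := by
  obtain ⟨T, P, hT, hTP, hP, hd, hinj⟩ :=
    statement0_general hdd (antitone_nat_of_succ_le hmono) hdK hbot
  exact ⟨T, P, existsUnique_add_add_eq_of_isCompl_sup hT hTP, hP,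
    fun j _ _ hx ↦ hd j (Submodule.mem_map_of_mem hx), fun j _ ↦ hinj j⟩
end

section
/- Let T, P ⊆ K be subspaces such that K is the internal direct sum K = T ⊕ d(T) ⊕ P, d(P) ⊆ P, d(K_j) ⊆ d(T) + K_{j+1} for all j = 0, …, S, and for each j the linear map sending α ∈ T ∩ K_j to the class of dα in K_j/K_{j+1} has kernel exactly T ∩ K_{j+1}. Then the inclusion of (P, d|_P) into (K, d) induces a linear isomorphism ker(d|_P)/im(d|_P) ≅ ker d / im d. -/
/-!
The filtration enters only through the injectivity of `d` on `T`: an element of `T ∩ ker d` is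
pushed down the filtration one step at a time. Given that, `T ⊕ d T` is an acyclic complement of
`P`. A boundary has the form `d t + d p`, and the `d T` part vanishes if the boundary lies in `P`,
so it is already a boundary in `P`. Conversely, if `t + d t' + p` is a cocycle, then
`d t = -d p ∈ d T ∩ P = 0`, so `t = 0` and the cocycle is cohomologous to `p`.
-/

open LinearMap Submodule

namespace IsInternalTriple

variable {𝕜 K : Type*} [Field 𝕜] [AddCommGroup K] [Module 𝕜 K] {A B C : Submodule 𝕜 K}

theorem sup_eq_top (h : IsInternalTriple A B C) : A ⊔ B ⊔ C = ⊤ := by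
  refine eq_top_iff'.2 fun x => ?_
  obtain ⟨⟨a, b, c⟩, rfl, -⟩ := h x
  exact add_mem_sup (add_mem_sup a.2 b.2) c.2

theorem disjoint_snd_thd (h : IsInternalTriple A B C) : Disjoint B C := by
  refine Submodule.disjoint_def.2 fun x hxB hxC => ?_
  have huniq : ((0, ⟨x, hxB⟩, 0) : A × B × C) = (0, 0, ⟨x, hxC⟩) :=
    (h x).unique (by simp) (by simp)
  simpa using congrArg (fun p : A × B × C => (p.2.1 : K)) huniq

end IsInternalTriple

section Filtration

variable {R M N : Type*} [Ring R] [AddCommGroup M] [Module R M] [AddCommGroup N] [Module R N]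

theorem disjoint_ker_of_filtration {f : M →ₗ[R] N} {T : Submodule R M} {n : ℕ}
    {F : ℕ → Submodule R M} {G : ℕ → Submodule R N} (hF_zero : T ≤ F 0) (hF_bot : F n = ⊥)
    (hf : ∀ j < n, ∀ x ∈ T, x ∈ F j → f x ∈ G (j + 1) → x ∈ F (j + 1)) :
    Disjoint T (ker f) := by
  refine Submodule.disjoint_def.2 fun x hxT hx => ?_
  have hxF : ∀ j ≤ n, x ∈ F j := by
    intro j hj
    induction j with
    | zero => exact hF_zero hxT
    | succ j ih =>
      have hfx : f x ∈ G (j + 1) := mem_ker.1 hx ▸ zero_mem _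
      exact hf j hj x hxT (ih (Nat.le_of_succ_le hj)) hfx
  exact (mem_bot R).1 (hF_bot ▸ hxF n le_rfl)

end Filtration

section Cohomology

variable {R K : Type*} [Ring R] [AddCommGroup K] [Module R K]

/-- The map on cohomology induced by the inclusion of `P` into `(K, d)`, where the cocycles of `P`
are encoded as the submodule `P ⊓ ker d` of `K` and its coboundaries as `map d P`. -/
def cohomologyInclusion (d : Module.End R K) (P : Submodule R K) :
    (↥(P ⊓ ker d) ⧸ (map d P).comap (P ⊓ ker d).subtype) →ₗ[R]
      (↥(ker d) ⧸ (range d).comap (ker d).subtype) :=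
  mapQ _ _ (inclusion inf_le_right) fun _ hx => map_le_range hx

variable {d : Module.End R K} {T P : Submodule R K}

theorem cohomologyInclusion_mk (x : ↥(P ⊓ ker d)) :
    cohomologyInclusion d P (Submodule.Quotient.mk x) =
      Submodule.Quotient.mk (inclusion inf_le_right x) :=
  rfl

theorem cohomologyInclusion_injective_iff :
    Function.Injective (cohomologyInclusion d P) ↔ P ⊓ ker d ⊓ range d ≤ map d P := by
  simp only [injective_iff_map_eq_zero, (Submodule.Quotient.mk_surjective _).forall,
    cohomologyInclusion_mk, Submodule.Quotient.mk_eq_zero]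
  exact ⟨fun h x hx => h ⟨x, hx.1⟩ hx.2, fun h x hx => h ⟨x.2, hx⟩⟩

theorem cohomologyInclusion_surjective_iff :
    Function.Surjective (cohomologyInclusion d P) ↔ ker d ≤ P ⊓ ker d ⊔ range d := by
  simp only [Function.Surjective, (Submodule.Quotient.mk_surjective _).forall,
    (Submodule.Quotient.mk_surjective _).exists, cohomologyInclusion_mk]
  constructor
  · intro h y hy
    obtain ⟨x, hx⟩ := h ⟨y, hy⟩
    have hyx : y - x ∈ range d := (Submodule.Quotient.eq (comap _ _)).1 hx.symm
    exact mem_sup.2 ⟨x, x.2, y - x, hyx, add_sub_cancel _ _⟩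
  · rintro h ⟨y, hy⟩
    obtain ⟨x, hx, b, hb, rfl⟩ := mem_sup.1 (h hy)
    refine ⟨⟨x, hx⟩, ((Submodule.Quotient.eq _).2 ?_).symm⟩
    simpa using hb

theorem map_map_eq_bot_of_mul_self_eq_zero (hdd : d * d = 0) : map d (map d T) = ⊥ := by
  rw [← map_comp, ← Module.End.mul_eq_comp, hdd, Submodule.map_zero]

theorem range_eq_map_sup_map (hdd : d * d = 0) (hspan : T ⊔ map d T ⊔ P = ⊤) :
    range d = map d T ⊔ map d P := by
  rw [range_eq_map, ← hspan, Submodule.map_sup, Submodule.map_sup,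
    map_map_eq_bot_of_mul_self_eq_zero hdd, sup_bot_eq]

theorem inf_range_eq_map (hdd : d * d = 0) (hspan : T ⊔ map d T ⊔ P = ⊤)
    (hTP : Disjoint (map d T) P) (hdP : map d P ≤ P) : P ⊓ range d = map d P :=
  calc
    P ⊓ range d = (map d P ⊔ map d T) ⊓ P := by
      rw [range_eq_map_sup_map hdd hspan, inf_comm, sup_comm]
    _ = map d P ⊔ map d T ⊓ P := sup_inf_assoc_of_le _ hdP
    _ = map d P := by rw [hTP.eq_bot, sup_bot_eq]

theorem ker_le_inf_ker_sup_range (hdd : d * d = 0) (hspan : T ⊔ map d T ⊔ P = ⊤)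
    (hTP : Disjoint (map d T) P) (hdP : map d P ≤ P) (hT : Disjoint T (ker d)) :
    ker d ≤ P ⊓ ker d ⊔ range d := by
  intro x hx
  obtain ⟨y, hy, p, hp, rfl⟩ := mem_sup.1 (hspan ▸ mem_top : x ∈ T ⊔ map d T ⊔ P)
  obtain ⟨t, ht, b, hb, rfl⟩ := mem_sup.1 hy
  have hdb : d b = 0 :=
    (mem_bot R).1 (map_map_eq_bot_of_mul_self_eq_zero hdd ▸ mem_map_of_mem hb)
  have hdtp : d t + d p = 0 := by simpa [hdb] using hx
  have hdt : d t = 0 :=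
    Submodule.disjoint_def.1 hTP _ (mem_map_of_mem ht) <| by
      rw [eq_neg_of_add_eq_zero_left hdtp]
      exact neg_mem (hdP (mem_map_of_mem hp))
  have hdp : d p = 0 := by simpa only [hdt, zero_add] using hdtp
  have ht_zero : t = 0 := Submodule.disjoint_def.1 hT _ ht hdt
  rw [ht_zero, zero_add, add_comm]
  exact add_mem_sup ⟨hp, hdp⟩ (map_le_range hb)

theorem cohomologyInclusion_bijective (hdd : d * d = 0) (hspan : T ⊔ map d T ⊔ P = ⊤)
    (hTP : Disjoint (map d T) P) (hdP : map d P ≤ P) (hT : Disjoint T (ker d)) :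
    Function.Bijective (cohomologyInclusion d P) :=
  ⟨cohomologyInclusion_injective_iff.2 <|
      (inf_le_inf_right _ inf_le_left).trans (inf_range_eq_map hdd hspan hTP hdP).le,
    cohomologyInclusion_surjective_iff.2 (ker_le_inf_ker_sup_range hdd hspan hTP hdP hT)⟩

theorem statement1_general (hdd : d * d = 0) (hspan : T ⊔ map d T ⊔ P = ⊤)
    (hTP : Disjoint (map d T) P) (hdP : map d P ≤ P) (hT : Disjoint T (ker d)) :
    ∃ e : (↥(P ⊓ ker d) ⧸ (map d P).comap (P ⊓ ker d).subtype) ≃ₗ[R]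
        (↥(ker d) ⧸ (range d).comap (ker d).subtype),
      ∀ (x : ↥(P ⊓ ker d)) (y : ↥(ker d)), (y : K) = (x : K) →
        e (Submodule.Quotient.mk x) = Submodule.Quotient.mk y := by
  refine ⟨.ofBijective _ (cohomologyInclusion_bijective hdd hspan hTP hdP hT), fun x y hyx => ?_⟩
  obtain rfl : y = inclusion inf_le_right x := Subtype.ext hyx
  exact cohomologyInclusion_mk x

end Cohomology

theorem statement1
    {𝕜 K : Type*} [Field 𝕜] [AddCommGroup K] [Module 𝕜 K]
    (S : ℕ) (Kfil : ℕ → Submodule 𝕜 K) (d : Module.End 𝕜 K)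
    (hdd : d * d = 0)
    (hK0 : Kfil 0 = ⊤)
    (hmono : ∀ j, Kfil (j + 1) ≤ Kfil j)
    (hbot : Kfil (S + 1) = ⊥)
    (hdK : ∀ j, ∀ x ∈ Kfil j, d x ∈ Kfil j)
    (T P : Submodule 𝕜 K)
    (hsum : IsInternalTriple T (Submodule.map d T) P)
    (hdP : ∀ x ∈ P, d x ∈ P)
    (hdKT : ∀ j ≤ S, ∀ x ∈ Kfil j, d x ∈ Submodule.map d T ⊔ Kfil (j + 1))
    (hker : ∀ j ≤ S, ∀ α ∈ T, α ∈ Kfil j → (d α ∈ Kfil (j + 1) ↔ α ∈ Kfil (j + 1))) :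
    ∃ e : (↥(P ⊓ LinearMap.ker d) ⧸
            (Submodule.map d P).comap (P ⊓ LinearMap.ker d).subtype) ≃ₗ[𝕜]
          (↥(LinearMap.ker d) ⧸ (LinearMap.range d).comap (LinearMap.ker d).subtype),
      ∀ (x : ↥(P ⊓ LinearMap.ker d)) (y : ↥(LinearMap.ker d)), (y : K) = (x : K) →
        e (Submodule.Quotient.mk x) = Submodule.Quotient.mk y := by
  have hT : Disjoint T (ker d) := disjoint_ker_of_filtration (hK0 ▸ le_top) hbot
    fun j hj α hαT hαj => (hker j (Nat.le_of_lt_succ hj) α hαT hαj).1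
  exact statement1_general hdd hsum.sup_eq_top hsum.disjoint_snd_thd (map_le_iff_le_comap.2 hdP) hT
end

section
/- Suppose K = T ⊕ d(T) ⊕ P and K = T̃ ⊕ d(T̃) ⊕ P̃ are two internal direct sum decompositions, each satisfying: d(P) ⊆ P (respectively d(P̃) ⊆ P̃), d(K_j) ⊆ d(T) + K_{j+1} (respectively d(K_j) ⊆ d(T̃) + K_{j+1}) for all j = 0, …, S, and for each j the map α ↦ dα mod K_{j+1} on T ∩ K_j (respectively on T̃ ∩ K_j) has kernel T ∩ K_{j+1} (respectively T̃ ∩ K_{j+1}). Then there exists a linear isomorphism φ : P̃ → P with φ ∘ (d|_{P̃}) = (d|_P) ∘ φ, i.e. (P, d|_P) and (P̃, d|_{P̃}) are isomorphic as cochain complexes. -/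
theorem exists_disjoint_and_forall_le_inf_sup_inf {α : Type*} [Lattice α] [BoundedOrder α]
    [IsModularLattice α] [ComplementedLattice α] (a : α) (n : ℕ) {F : ℕ → α} (hF : Antitone F)
    (hbot : F n = ⊥) : ∃ c, Disjoint a c ∧ ∀ j, F j ≤ a ⊓ F j ⊔ c ⊓ F j := by
  induction n generalizing F with
  | zero => exact ⟨⊥, disjoint_bot_right, fun j => by simp [le_bot_iff.1 (hbot ▸ hF j.zero_le)]⟩
  | succ n ih =>
    obtain ⟨c, hac, hc⟩ := ih (F := fun j => F (j + 1)) (fun i j hij => hF (by lia)) hbot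
    have h_disj : Disjoint (c ⊓ F 1) (a ⊓ F 0) := hac.symm.mono inf_le_left inf_le_left
    obtain ⟨b, hcb, hb⟩ := h_disj.exists_isCompl
    have hcb' : c ⊓ F 1 ≤ b ⊓ F 0 := le_inf hcb (inf_le_right.trans (hF zero_le_one))
    refine ⟨b ⊓ F 0, ?_, fun j => ?_⟩
    · rw [disjoint_iff, inf_comm b, ← inf_assoc]
      exact hb.symm.inf_eq_bot
    · cases j with
      | zero =>
        rw [inf_assoc, inf_idem, ← sup_inf_assoc_of_le b inf_le_right, hb.symm.sup_eq_top,
          top_inf_eq]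
      | succ j =>
        refine (hc j).trans (sup_le_sup_left (le_inf ?_ inf_le_right) _)
        exact (inf_le_inf_left c (hF (by lia))).trans hcb'

section SpecialHomotopy

variable {A : Type*} [Ring A] {d h : A}

/-- The side conditions of homological perturbation theory for a homotopy `h` of a complex with
differential `d`, in the ring of endomorphisms of the underlying module. -/
structure IsSpecialHomotopy (d h : A) : Prop where
  d_mul_d : d * d = 0
  h_mul_h : h * h = 0
  h_mul_d_mul_h : h * d * h = h

/-- The chain map homotopic to the identity through `h`; for a special homotopy it is the
projection onto the retract. -/
def homotopyProjection (d h : A) : A := 1 - (h * d + d * h)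

theorem one_sub_homotopyProjection : 1 - homotopyProjection d h = h * d + d * h :=
  sub_sub_cancel _ _

namespace IsSpecialHomotopy

theorem isIdempotentElem_homotopyProjection (hh : IsSpecialHomotopy d h) :
    IsIdempotentElem (homotopyProjection d h) := by
  refine IsIdempotentElem.one_sub ?_
  calc (h * d + d * h) * (h * d + d * h)
      = h * d * h * d + h * (d * d) * h + d * (h * h) * d + d * (h * d * h) := by noncomm_ring
    _ = h * d + d * h := by simp [hh.d_mul_d, hh.h_mul_h, hh.h_mul_d_mul_h]

theorem commute_homotopyProjection (hh : IsSpecialHomotopy d h) :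
    Commute d (homotopyProjection d h) := by
  have h_comm : d * (h * d + d * h) = (h * d + d * h) * d := by
    rw [mul_add, add_mul, mul_assoc h, ← mul_assoc d d, hh.d_mul_d, mul_zero, zero_mul, add_zero,
      zero_add, mul_assoc]
  exact (Commute.one_right d).sub_right h_comm

theorem homotopyProjection_mul_h (hh : IsSpecialHomotopy d h) : homotopyProjection d h * h = 0 := by
  rw [homotopyProjection, sub_mul, add_mul, hh.h_mul_d_mul_h, mul_assoc, hh.h_mul_h]
  simp

theorem homotopyProjection_mul_d_mul_h (hh : IsSpecialHomotopy d h) :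
    homotopyProjection d h * (d * h) = 0 := by
  rw [← mul_assoc, ← hh.commute_homotopyProjection.eq, mul_assoc, hh.homotopyProjection_mul_h,
    mul_zero]

end IsSpecialHomotopy

end SpecialHomotopy

section FilteredModule

variable {R K : Type*} [Ring R] [AddCommGroup K] [Module R K]

theorem homotopyProjection_apply (d h : Module.End R K) (x : K) :
    homotopyProjection d h x = x - (h (d x) + d (h x)) :=
  rfl

theorem homotopyProjection_apply_mem {d h : Module.End R K} {G : Submodule R K}
    (hd : ∀ x ∈ G, d x ∈ G) (hh : ∀ x ∈ G, h x ∈ G) :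
    ∀ x ∈ G, homotopyProjection d h x ∈ G := fun x hx =>
  sub_mem hx (add_mem (hh _ (hd x hx)) (hd _ (hh x hx)))

namespace IsSpecialHomotopy

variable {d h : Module.End R K}

theorem ker_homotopyProjection (hh : IsSpecialHomotopy d h) :
    (homotopyProjection d h).ker = h.range ⊔ h.range.map d := by
  apply le_antisymm
  · intro x hx
    rw [LinearMap.mem_ker, homotopyProjection_apply, sub_eq_zero] at hx
    rw [hx]
    exact Submodule.add_mem_sup ⟨d x, rfl⟩ ⟨h x, ⟨x, rfl⟩, rfl⟩
  · rw [sup_le_iff, ← LinearMap.range_comp]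
    exact ⟨LinearMap.range_le_ker_iff.2 hh.homotopyProjection_mul_h,
      LinearMap.range_le_ker_iff.2 hh.homotopyProjection_mul_d_mul_h⟩

theorem d_homotopyProjection_mem (hh : IsSpecialHomotopy d h) {G : Submodule R K}
    (hG : ∀ x ∈ G, homotopyProjection d h x ∈ G) {x : K} (hx : d x ∈ h.range.map d ⊔ G) :
    d (homotopyProjection d h x) ∈ G := by
  obtain ⟨_, ⟨_, ⟨y, rfl⟩, rfl⟩, k, hk, h_eq⟩ := Submodule.mem_sup.1 hx
  have h_comm : d (homotopyProjection d h x) = homotopyProjection d h (d x) :=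
    LinearMap.congr_fun hh.commute_homotopyProjection.eq x
  have h_kill : homotopyProjection d h (d (h y)) = 0 :=
    LinearMap.congr_fun hh.homotopyProjection_mul_d_mul_h y
  rw [h_comm, ← h_eq, map_add, h_kill, zero_add]
  exact hG k hk

end IsSpecialHomotopy

theorem isNilpotent_of_forall_mem_succ {f : Module.End R K} {F : ℕ → Submodule R K} {n : ℕ}
    (htop : F 0 = ⊤) (hbot : F n = ⊥) (hf : ∀ j < n, ∀ x ∈ F j, f x ∈ F (j + 1)) :
    IsNilpotent f := by
  have h_pow : ∀ j ≤ n, ∀ x, (f ^ j) x ∈ F j := by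
    intro j
    induction j with
    | zero => simp [htop]
    | succ j ih =>
      intro hj x
      rw [pow_succ', Module.End.mul_apply]
      exact hf j hj _ (ih (by lia) x)
  refine ⟨n, LinearMap.ext fun x => ?_⟩
  simpa [hbot] using h_pow n le_rfl x

theorem isNilpotent_compression_homotopy {d p k : Module.End R K} {F : ℕ → Submodule R K} {n : ℕ}
    (htop : F 0 = ⊤) (hbot : F n = ⊥) (hdp : Commute d p)
    (hp : ∀ j, ∀ x ∈ F j, p x ∈ F j) (hk : ∀ j, ∀ x ∈ F j, k x ∈ F j)
    (hshift : ∀ j < n, ∀ x ∈ F j, d (p x) ∈ F (j + 1)) :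
    IsNilpotent (p * (k * d + d * k) * p) := by
  refine isNilpotent_of_forall_mem_succ htop hbot fun j hj x hx => ?_
  have h_comm : p (d (k (p x))) = d (p (k (p x))) := (LinearMap.congr_fun hdp.eq _).symm
  have h_eq : (p * (k * d + d * k) * p) x = p (k (d (p x))) + d (p (k (p x))) := by
    simp only [Module.End.mul_apply, LinearMap.add_apply, map_add, h_comm]
  rw [h_eq]
  exact add_mem (hp _ _ (hk _ _ (hshift j hj x hx))) (hshift j hj _ (hk j _ (hp j x hx)))

theorem isCompl_ker_range_of_isNilpotent {p q : Module.End R K} (hp : IsIdempotentElem p)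
    (hq : IsIdempotentElem q) (hpqp : IsNilpotent (p * (1 - q) * p))
    (hqpq : IsNilpotent (q * (1 - p) * q)) : IsCompl p.ker q.range := by
  have hpp : ∀ x, p (p x) = p x := LinearMap.congr_fun hp.eq
  have hqq : ∀ x, q (q x) = q x := LinearMap.congr_fun hq.eq
  constructor
  · rw [Submodule.disjoint_def]
    rintro _ hx ⟨y, rfl⟩
    rw [LinearMap.mem_ker] at hx
    have h_fixed : (1 - q * (1 - p) * q) (q y) = 0 := by simp [hqq, hx]
    exact (Module.End.isUnit_iff _).1 hqpq.isUnit_one_sub |>.injective (by rw [h_fixed, map_zero])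
  · rw [codisjoint_iff, eq_top_iff]
    rintro x -
    obtain ⟨w, rfl⟩ := (Module.End.isUnit_iff _).1 hpqp.isUnit_one_sub |>.surjective x
    refine Submodule.mem_sup.2 ⟨_, ?_, q (p w), ⟨p w, rfl⟩, sub_add_cancel _ _⟩
    simp [hpp]

theorem exists_linearEquiv_of_isCompl_of_isCompl {d : Module.End R K} {E C C' : Submodule R K}
    (hE : ∀ x ∈ E, d x ∈ E) (hC : IsCompl E C) (hC' : IsCompl E C')
    (hdC : ∀ x ∈ C, d x ∈ C) (hdC' : ∀ x ∈ C', d x ∈ C') :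
    ∃ e : C ≃ₗ[R] C', ∀ x, e (d.restrict hdC x) = d.restrict hdC' (e x) := by
  let e := (Submodule.quotientEquivOfIsCompl E C hC).symm ≪≫ₗ
    Submodule.quotientEquivOfIsCompl E C' hC'
  have he : ∀ x : C, (e x : K) - x ∈ E := fun x =>
    (Submodule.Quotient.eq E).1 (by rw [LinearEquiv.trans_apply,
      Submodule.mk_quotientEquivOfIsCompl_apply]; rfl)
  refine ⟨e, fun x => Subtype.ext (sub_eq_zero.1 ?_)⟩
  refine Submodule.disjoint_def.1 hC'.disjoint _ ?_ (Submodule.sub_mem _ (e _).2 (Subtype.prop _))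
  simpa using E.sub_mem (he (d.restrict hdC x)) (hE _ (he x))

theorem IsSpecialHomotopy.isCompl_ker_range_homotopyProjection {d h h' : Module.End R K}
    {F : ℕ → Submodule R K} {n : ℕ} (htop : F 0 = ⊤) (hbot : F n = ⊥)
    (hd : ∀ j, ∀ x ∈ F j, d x ∈ F j)
    (hh : IsSpecialHomotopy d h) (hhF : ∀ j, ∀ x ∈ F j, h x ∈ F j)
    (hshift : ∀ j < n, ∀ x ∈ F j, d x ∈ h.range.map d ⊔ F (j + 1))
    (hh' : IsSpecialHomotopy d h') (hhF' : ∀ j, ∀ x ∈ F j, h' x ∈ F j)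
    (hshift' : ∀ j < n, ∀ x ∈ F j, d x ∈ h'.range.map d ⊔ F (j + 1)) :
    IsCompl (homotopyProjection d h).ker (homotopyProjection d h').range := by
  have hp := fun j => homotopyProjection_apply_mem (hd j) (hhF j)
  have hp' := fun j => homotopyProjection_apply_mem (hd j) (hhF' j)
  refine isCompl_ker_range_of_isNilpotent hh.isIdempotentElem_homotopyProjection
    hh'.isIdempotentElem_homotopyProjection ?_ ?_ <;> rw [one_sub_homotopyProjection]
  · exact isNilpotent_compression_homotopy htop hbot hh.commute_homotopyProjection hp hhF'
      fun j hj x hx => hh.d_homotopyProjection_mem (hp _) (hshift j hj x hx)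
  · exact isNilpotent_compression_homotopy htop hbot hh'.commute_homotopyProjection hp' hhF
      fun j hj x hx => hh'.d_homotopyProjection_mem (hp' _) (hshift' j hj x hx)

theorem mem_of_d_mem {d : Module.End R K} {F : ℕ → Submodule R K} {n : ℕ} {T : Submodule R K}
    (htop : F 0 = ⊤) (hF : Antitone F) (hbot : F n = ⊥)
    (hker : ∀ j < n, ∀ t ∈ T, t ∈ F j → d t ∈ F (j + 1) → t ∈ F (j + 1))
    (j : ℕ) {t : K} (ht : t ∈ T) (hdt : d t ∈ F j) : t ∈ F j := by
  induction j with
  | zero => simp [htop]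
  | succ j ih =>
    have htj : t ∈ F j := ih (hF j.le_succ hdt)
    rcases lt_or_ge j n with hj | hj
    · exact hker j hj t ht htj hdt
    · have ht0 : t = 0 := by simpa [hbot] using hF hj htj
      exact ht0 ▸ zero_mem _

theorem exists_isSpecialHomotopy_of_isCompl {d : Module.End R K} (hdd : d * d = 0)
    {T C : Submodule R K} (hinj : ∀ t ∈ T, d t = 0 → t = 0) (hC : IsCompl (T ⊔ T.map d) C) :
    ∃ h : Module.End R K, IsSpecialHomotopy d h ∧ h.range = T ∧ ∀ c ∈ C, h c = 0 := by
  have hdd' : ∀ x, d (d x) = 0 := LinearMap.congr_fun hdd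
  have h_disj : Disjoint (T.map d) T := by
    rw [Submodule.disjoint_def]
    rintro _ ⟨t, -, rfl⟩ hdt
    exact hinj _ hdt (hdd' t)
  have h_compl : IsCompl (d.domRestrict T).range (T ⊔ C) := by
    rw [LinearMap.range_domRestrict]
    exact h_disj.isCompl_sup_right_of_isCompl_sup_left (sup_comm T _ ▸ hC)
  have h_inj : Function.Injective (d.domRestrict T) :=
    (injective_iff_map_eq_zero _).2 fun t ht => Subtype.ext (hinj t t.2 ht)
  let g : K →ₗ[R] T := LinearMap.linearProjOfIsCompl (T ⊔ C) (d.domRestrict T) h_inj h_compl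
  have hg_dT : ∀ t : T, g (d t) = t := LinearMap.linearProjOfIsCompl_apply_left _ _ h_inj h_compl
  have hg_TC : ∀ x ∈ T ⊔ C, g x = 0 :=
    LinearMap.linearProjOfIsCompl_apply_right' _ _ h_inj h_compl
  have hg_T : ∀ t : T, g t = 0 := fun t => hg_TC t (Submodule.mem_sup_left t.2)
  refine ⟨T.subtype ∘ₗ g, ⟨hdd, ?_, ?_⟩, ?_, fun c hc => ?_⟩
  · exact LinearMap.ext fun x => congrArg Subtype.val (hg_T (g x))
  · exact LinearMap.ext fun x => congrArg Subtype.val (hg_dT (g x))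
  · refine le_antisymm ?_ fun t ht => ⟨d t, congrArg Subtype.val (hg_dT ⟨t, ht⟩)⟩
    rintro _ ⟨x, rfl⟩
    exact (g x).2
  · exact congrArg Subtype.val (hg_TC c (Submodule.mem_sup_right hc))

theorem exists_isSpecialHomotopy_forall_mem [IsSemisimpleModule R K] {d : Module.End R K}
    (hdd : d * d = 0) {F : ℕ → Submodule R K} {n : ℕ} (htop : F 0 = ⊤) (hF : Antitone F)
    (hbot : F n = ⊥) (hd : ∀ j, ∀ x ∈ F j, d x ∈ F j) {T : Submodule R K}
    (hker : ∀ j < n, ∀ t ∈ T, t ∈ F j → d t ∈ F (j + 1) → t ∈ F (j + 1)) :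
    ∃ h : Module.End R K, IsSpecialHomotopy d h ∧ h.range = T ∧ ∀ j, ∀ x ∈ F j, h x ∈ F j := by
  have h_strict : ∀ j, ∀ t ∈ T, d t ∈ F j → t ∈ F j := fun j t =>
    mem_of_d_mem htop hF hbot hker j
  have h_inj : ∀ t ∈ T, d t = 0 → t = 0 := fun t ht hdt => by
    simpa [hbot] using h_strict n t ht (hdt ▸ zero_mem _)
  obtain ⟨C, h_disj, h_split⟩ := exists_disjoint_and_forall_le_inf_sup_inf (T ⊔ T.map d) n hF hbot
  have h_compl : IsCompl (T ⊔ T.map d) C :=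
    ⟨h_disj, codisjoint_iff.2 (by simpa [htop] using h_split 0)⟩
  obtain ⟨h, hh, h_range, hC⟩ := exists_isSpecialHomotopy_of_isCompl hdd h_inj h_compl
  refine ⟨h, hh, h_range, fun j x hx => ?_⟩
  subst h_range
  obtain ⟨a, ⟨ha, haF⟩, c, ⟨hc, -⟩, rfl⟩ := Submodule.mem_sup.1 (h_split j hx)
  obtain ⟨_, ⟨t, rfl⟩, _, ⟨_, ⟨u, rfl⟩, rfl⟩, rfl⟩ := Submodule.mem_sup.1 ha
  have hht : h (h t) = 0 := LinearMap.congr_fun hh.h_mul_h t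
  have hhu : h (d (h u)) = h u := LinearMap.congr_fun hh.h_mul_d_mul_h u
  have hddu : d (d (h u)) = 0 := LinearMap.congr_fun hdd (h u)
  have htF : h t ∈ F j := h_strict j _ ⟨t, rfl⟩ (by simpa [hddu] using hd j _ haF)
  have huF : h u ∈ F j := h_strict j _ ⟨u, rfl⟩ ((Submodule.add_mem_iff_right _ htF).1 haF)
  simpa [hht, hhu, hC c hc] using huF

end FilteredModule

theorem IsInternalTriple.isCompl_sup {𝕜 K : Type*} [Field 𝕜] [AddCommGroup K] [Module 𝕜 K]
    {A B C : Submodule 𝕜 K} (h : IsInternalTriple A B C) : IsCompl (A ⊔ B) C := by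
  constructor
  · rw [Submodule.disjoint_def]
    intro x hx hxC
    obtain ⟨a, ha, b, hb, rfl⟩ := Submodule.mem_sup.1 hx
    have h_eq := (h (a + b)).unique (y₁ := (⟨a, ha⟩, ⟨b, hb⟩, 0)) (y₂ := (0, 0, ⟨a + b, hxC⟩))
      (by simp) (by simp)
    simpa using (congrArg (fun t => (t.2.2 : K)) h_eq).symm
  · rw [codisjoint_iff, eq_top_iff]
    rintro x -
    obtain ⟨⟨a, b, c⟩, rfl, -⟩ := h x
    exact Submodule.add_mem_sup (Submodule.add_mem_sup a.2 b.2) c.2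

theorem statement2_general {R K : Type*} [Ring R] [AddCommGroup K] [Module R K]
    [IsSemisimpleModule R K] {S : ℕ} {F : ℕ → Submodule R K} {d : Module.End R K}
    (hdd : d * d = 0) (htop : F 0 = ⊤) (hmono : ∀ j, F (j + 1) ≤ F j) (hbot : F (S + 1) = ⊥)
    (hd : ∀ j, ∀ x ∈ F j, d x ∈ F j)
    {T P : Submodule R K} (hTP : IsCompl (T ⊔ T.map d) P) (hdP : ∀ x ∈ P, d x ∈ P)
    (hdT : ∀ j ≤ S, ∀ x ∈ F j, d x ∈ T.map d ⊔ F (j + 1))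
    (hker : ∀ j ≤ S, ∀ t ∈ T, t ∈ F j → d t ∈ F (j + 1) → t ∈ F (j + 1))
    {T' P' : Submodule R K} (hTP' : IsCompl (T' ⊔ T'.map d) P') (hdP' : ∀ x ∈ P', d x ∈ P')
    (hdT' : ∀ j ≤ S, ∀ x ∈ F j, d x ∈ T'.map d ⊔ F (j + 1))
    (hker' : ∀ j ≤ S, ∀ t ∈ T', t ∈ F j → d t ∈ F (j + 1) → t ∈ F (j + 1)) :
    ∃ e : P' ≃ₗ[R] P, ∀ x, e (d.restrict hdP' x) = d.restrict hdP (e x) := by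
  simp only [← Nat.lt_add_one_iff (n := S)] at hdT hker hdT' hker'
  have hF : Antitone F := antitone_nat_of_succ_le hmono
  obtain ⟨h, hh, rfl, hhF⟩ := exists_isSpecialHomotopy_forall_mem hdd htop hF hbot hd hker
  obtain ⟨h', hh', rfl, hhF'⟩ := exists_isSpecialHomotopy_forall_mem hdd htop hF hbot hd hker'
  rw [← hh.ker_homotopyProjection] at hTP
  rw [← hh'.ker_homotopyProjection] at hTP'
  have h_idem : IsIdempotentElem (homotopyProjection d h) := hh.isIdempotentElem_homotopyProjection
  have h_idem' : IsIdempotentElem (homotopyProjection d h') :=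
    hh'.isIdempotentElem_homotopyProjection
  obtain ⟨-, hd_ker⟩ :=
    (LinearMap.IsIdempotentElem.commute_iff h_idem).1 hh.commute_homotopyProjection.symm
  obtain ⟨hd_range', hd_ker'⟩ :=
    (LinearMap.IsIdempotentElem.commute_iff h_idem').1 hh'.commute_homotopyProjection.symm
  have h_compl : IsCompl (homotopyProjection d h).ker (homotopyProjection d h').range :=
    hh.isCompl_ker_range_homotopyProjection htop hbot hd hhF hdT hh' hhF' hdT'
  have h_compl' : IsCompl (homotopyProjection d h').ker (homotopyProjection d h').range :=
    (LinearMap.IsIdempotentElem.isCompl h_idem').symm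
  obtain ⟨e', he'⟩ :=
    exists_linearEquiv_of_isCompl_of_isCompl hd_ker' hTP' h_compl' hdP' hd_range'
  obtain ⟨e, he⟩ := exists_linearEquiv_of_isCompl_of_isCompl hd_ker h_compl hTP hd_range' hdP
  exact ⟨e' ≪≫ₗ e, fun x => by simp only [LinearEquiv.trans_apply, he', he]⟩

theorem statement2
    {𝕜 K : Type*} [Field 𝕜] [AddCommGroup K] [Module 𝕜 K]
    (S : ℕ) (Kfil : ℕ → Submodule 𝕜 K) (d : Module.End 𝕜 K)
    (hdd : d * d = 0)
    (hK0 : Kfil 0 = ⊤)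
    (hmono : ∀ j, Kfil (j + 1) ≤ Kfil j)
    (hbot : Kfil (S + 1) = ⊥)
    (hdK : ∀ j, ∀ x ∈ Kfil j, d x ∈ Kfil j)
    (T P : Submodule 𝕜 K)
    (hsum : IsInternalTriple T (Submodule.map d T) P)
    (hdP : ∀ x ∈ P, d x ∈ P)
    (hdKT : ∀ j ≤ S, ∀ x ∈ Kfil j, d x ∈ Submodule.map d T ⊔ Kfil (j + 1))
    (hker : ∀ j ≤ S, ∀ α ∈ T, α ∈ Kfil j → (d α ∈ Kfil (j + 1) ↔ α ∈ Kfil (j + 1)))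
    (T' P' : Submodule 𝕜 K)
    (hsum' : IsInternalTriple T' (Submodule.map d T') P')
    (hdP' : ∀ x ∈ P', d x ∈ P')
    (hdKT' : ∀ j ≤ S, ∀ x ∈ Kfil j, d x ∈ Submodule.map d T' ⊔ Kfil (j + 1))
    (hker' : ∀ j ≤ S, ∀ α ∈ T', α ∈ Kfil j → (d α ∈ Kfil (j + 1) ↔ α ∈ Kfil (j + 1))) :
    ∃ e : ↥P' ≃ₗ[𝕜] ↥P,
      ∀ x y : ↥P', (y : K) = d (x : K) → (e y : K) = d (e x : K) := by
  obtain ⟨e, he⟩ := statement2_general hdd hK0 hmono hbot hdK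
    hsum.isCompl_sup hdP hdKT (fun j hj t ht htj => (hker j hj t ht htj).1)
    hsum'.isCompl_sup hdP' hdKT' (fun j hj t ht htj => (hker' j hj t ht htj).1)
  exact ⟨e, fun x y hxy => (Subtype.ext hxy : y = d.restrict hdP' x) ▸ congrArg Subtype.val (he x)⟩
end

section
/- Every filtered cochain complex (K, d) of finite depth S over a field admits a base differential d₀ : K → K together with a base transversal T and a base cotransversal C for d₀ (so in particular T ⊆ C). -/
/-!
Complementing the steps of the filtration splits it: there are complete orthogonal idempotents
`e i` with `K_j = ⋂_{i < j} ker (e i)`. Replace an endomorphism `a` by its block-diagonal part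
`∑ i, e i * a * e i`. Applied to `d` this gives the base differential, a copy of the associated
graded map of `d` on `K`. Applied, as in Maschke's theorem, to any projection onto `ker d₀` it gives
a projection commuting with the `e i`, whose kernel is a graded complement `T` of `ker d₀`. Since
`d₀` is graded and injective on `T`, it preserves and reflects the filtration there.
-/

section Ring

variable {A : Type*}

/-- The block-diagonal part of `a` with respect to a finite family of idempotents `e` (its image
under the "pinching" map). It is the device that makes both the differential and the projection
onto its kernel compatible with a splitting of the filtration. -/
def diagonalPart {ι : Type*} [Fintype ι] [Semiring A] (e : ι → A) (a : A) : A :=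
  ∑ i, e i * a * e i

section DiagonalPart

variable {ι : Type*} [Fintype ι] [Semiring A] {e : ι → A}

lemma mul_diagonalPart (he : OrthogonalIdempotents e) (a : A) (i : ι) :
    e i * diagonalPart e a = e i * a * e i := by
  classical
  simp [diagonalPart, Finset.mul_sum, ← mul_assoc, he.mul_eq, ite_mul]

lemma diagonalPart_mul (he : OrthogonalIdempotents e) (a : A) (i : ι) :
    diagonalPart e a * e i = e i * a * e i := by
  classical
  simp [diagonalPart, Finset.sum_mul, mul_assoc, he.mul_eq, mul_ite]

lemma commute_diagonalPart (he : OrthogonalIdempotents e) (a : A) (i : ι) :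
    Commute (e i) (diagonalPart e a) :=
  (mul_diagonalPart he a i).trans (diagonalPart_mul he a i).symm

end DiagonalPart

lemma completeOrthogonalIdempotents_sub_succ [Ring A] {p : ℕ → A} {n : ℕ}
    (hp : ∀ i j, p i * p j = p (max i j)) (h_zero : p 0 = 1) (hn : p n = 0) :
    CompleteOrthogonalIdempotents fun i : Fin n ↦ p i - p (i + 1) where
  idem i := by
    simp only [IsIdempotentElem, sub_mul, mul_sub, hp, max_self, Nat.le_succ, max_eq_left,
      max_eq_right]
    abel
  ortho i j hij := by
    simp only [sub_mul, mul_sub, hp]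
    rcases lt_or_gt_of_ne (Fin.val_ne_of_ne hij) with h | h
    · rw [max_eq_right h.le, max_eq_right (by lia), max_eq_right (by lia), max_eq_right (by lia)]
      abel
    · rw [max_eq_left h.le, max_eq_left (by lia), max_eq_left (by lia), max_eq_left (by lia)]
      abel
  complete := by
    rw [Fin.sum_univ_eq_sum_range (fun i ↦ p i - p (i + 1)), Finset.sum_range_sub', h_zero, hn,
      sub_zero]

end Ring

section Semimodule

variable {R K : Type*} [Semiring R] [AddCommMonoid K] [Module R K]

lemma apply_mem_ker_of_commute {f g : Module.End R K} (h : Commute f g) :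
    ∀ x ∈ LinearMap.ker g, f x ∈ LinearMap.ker g := fun x hx ↦ by
  rw [LinearMap.mem_ker] at hx ⊢
  rw [← Module.End.mul_apply, ← h, Module.End.mul_apply, hx, map_zero]

variable {ι : Type*} [Fintype ι] {e : ι → Module.End R K}

lemma sum_apply_eq_self (he : CompleteOrthogonalIdempotents e) (x : K) : ∑ i, e i x = x := by
  rw [← LinearMap.sum_apply, he.complete, Module.End.one_apply]

lemma isProj_diagonalPart (he : CompleteOrthogonalIdempotents e) {N : Submodule R K}
    (hN : ∀ i, ∀ x ∈ N, e i x ∈ N) {q : Module.End R K} (hq : LinearMap.IsProj N q) :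
    LinearMap.IsProj N (diagonalPart e q) where
  map_mem x := by
    rw [diagonalPart, LinearMap.sum_apply]
    exact N.sum_mem fun i _ ↦ hN i _ (hq.map_mem _)
  map_id x hx := by
    have block (i : ι) : (e i * q * e i) x = e i x := by
      rw [Module.End.mul_apply, Module.End.mul_apply, hq.map_id _ (hN i x hx),
        ← Module.End.mul_apply, he.idem i]
    rw [diagonalPart, LinearMap.sum_apply, Finset.sum_congr rfl fun i _ ↦ block i,
      sum_apply_eq_self he]

end Semimodule

section Module

variable {R K : Type*} [Ring R] [AddCommGroup K] [Module R K]

lemma exists_isProj [IsSemisimpleModule R K] (N : Submodule R K) :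
    ∃ q : Module.End R K, LinearMap.IsProj N q := by
  obtain ⟨N', h⟩ := exists_isCompl N
  exact ⟨N.projection N' h, Submodule.projection_apply_mem h,
    fun _ ↦ Submodule.projection_apply_of_mem_left h⟩

lemma exists_isCompl_forall_apply_mem [IsSemisimpleModule R K] {ι : Type*} [Fintype ι]
    {e : ι → Module.End R K} (he : CompleteOrthogonalIdempotents e) {N : Submodule R K}
    (hN : ∀ i, ∀ x ∈ N, e i x ∈ N) :
    ∃ T : Submodule R K, IsCompl N T ∧ ∀ i, ∀ x ∈ T, e i x ∈ T := by
  obtain ⟨q, hq⟩ := exists_isProj N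
  exact ⟨LinearMap.ker (diagonalPart e q), (isProj_diagonalPart he hN hq).isCompl, fun i ↦
    apply_mem_ker_of_commute (commute_diagonalPart he.toOrthogonalIdempotents q i)⟩

lemma exists_isProj_mul_eq_max [IsSemisimpleModule R K] {F : ℕ → Submodule R K} (hF : Antitone F) :
    ∃ p : ℕ → Module.End R K,
      (∀ i, LinearMap.IsProj (F i) (p i)) ∧ ∀ i j, p i * p j = p (max i j) := by
  choose r hr using fun i ↦ exists_isProj (F i)
  -- An arbitrary choice of projections does not commute; these composites do.
  let p (n : ℕ) : Module.End R K := Nat.rec (r 0) (fun n q ↦ r (n + 1) * q) n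
  have p_succ (n : ℕ) : p (n + 1) = r (n + 1) * p n := rfl
  have isProj (n : ℕ) : LinearMap.IsProj (F n) (p n) := by
    induction n with
    | zero => exact hr 0
    | succ n ih =>
      refine ⟨fun x ↦ (hr (n + 1)).map_mem _, fun x hx ↦ ?_⟩
      rw [p_succ, Module.End.mul_apply, ih.map_id x (hF n.le_succ hx), (hr (n + 1)).map_id x hx]
  have mul_of_le {i j : ℕ} (h : i ≤ j) : p i * p j = p j :=
    LinearMap.ext fun x ↦ (isProj i).map_id _ (hF h ((isProj j).map_mem x))
  have mul_of_ge {i j : ℕ} (h : i ≤ j) : p j * p i = p j := by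
    induction j, h using Nat.le_induction with
    | base => exact mul_of_le le_rfl
    | succ j _ ih => rw [p_succ, mul_assoc, ih]
  refine ⟨p, isProj, fun i j ↦ ?_⟩
  rcases le_total i j with h | h
  · rw [max_eq_right h, mul_of_le h]
  · rw [max_eq_left h, mul_of_ge h]

/-- A splitting of a filtration `F` with `F n = ⊥`, encoded by the projections `e i` onto the
summands: `F j` is the sum of the summands with index at least `j`. -/
structure SplitsFiltration {n : ℕ} (e : Fin n → Module.End R K) (F : ℕ → Submodule R K) : Prop
    extends CompleteOrthogonalIdempotents e where
  mem_iff : ∀ j x, x ∈ F j ↔ ∀ i : Fin n, (i : ℕ) < j → e i x = 0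

theorem exists_splitsFiltration [IsSemisimpleModule R K] {F : ℕ → Submodule R K} {n : ℕ}
    (hF : Antitone F) (h_zero : F 0 = ⊤) (hn : F n = ⊥) :
    ∃ e : Fin n → Module.End R K, SplitsFiltration e F := by
  obtain ⟨p, hp, hmul⟩ := exists_isProj_mul_eq_max hF
  have p_zero : p 0 = 1 := LinearMap.ext fun x ↦ (hp 0).map_id x (h_zero ▸ Submodule.mem_top)
  have p_n : p n = 0 := LinearMap.ext fun x ↦ (Submodule.mem_bot R).mp (hn ▸ (hp n).map_mem x)
  refine ⟨_, completeOrthogonalIdempotents_sub_succ hmul p_zero p_n, fun j x ↦ ⟨fun hx i hi ↦ ?_,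
    fun hx ↦ ?_⟩⟩
  · rw [LinearMap.sub_apply, (hp i).map_id x (hF hi.le hx), (hp (i + 1)).map_id x (hF hi hx),
      sub_self]
  · induction j with
    | zero => exact h_zero ▸ Submodule.mem_top
    | succ j ih =>
      have hxj : x ∈ F j := ih fun i hi ↦ hx i (hi.trans j.lt_succ_self)
      rcases lt_or_ge j n with hj | hj
      · have h : p j x - p (j + 1) x = 0 := hx ⟨j, hj⟩ j.lt_succ_self
        rw [(hp j).map_id x hxj, sub_eq_zero] at h
        exact h ▸ (hp (j + 1)).map_mem x
      · have : x = 0 := (Submodule.mem_bot R).mp (hn ▸ hF hj hxj)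
        exact this ▸ (F (j + 1)).zero_mem

namespace SplitsFiltration

variable {n : ℕ} {e : Fin n → Module.End R K} {F : ℕ → Submodule R K} {d : Module.End R K}

lemma antitone (he : SplitsFiltration e F) : Antitone F := fun _ _ hjk x hx ↦
  (he.mem_iff _ x).mpr fun i hi ↦ (he.mem_iff _ x).mp hx i (hi.trans_le hjk)

lemma apply_mem (he : SplitsFiltration e F) (i : Fin n) (x : K) : e i x ∈ F i :=
  (he.mem_iff i _).mpr fun _ hk ↦ LinearMap.congr_fun (he.ortho (Fin.ne_of_lt hk)) x

lemma sub_apply_mem (he : SplitsFiltration e F) (i : Fin n) {x : K} (hx : x ∈ F i) :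
    x - e i x ∈ F (i + 1) := by
  refine (he.mem_iff _ _).mpr fun k hk ↦ ?_
  rw [map_sub, sub_eq_zero]
  rcases (Nat.lt_succ_iff.mp hk).lt_or_eq with h | h
  · rw [(he.mem_iff _ _).mp hx k h, (he.mem_iff _ _).mp (he.apply_mem i x) k h]
  · rw [Fin.ext h, ← Module.End.mul_apply, he.idem i]

lemma apply_map_apply (he : SplitsFiltration e F) (hd : ∀ j, ∀ x ∈ F j, d x ∈ F j) (i : Fin n)
    {x : K} (hx : x ∈ F i) : e i (d (e i x)) = e i (d x) := by
  have h : e i (d (x - e i x)) = 0 :=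
    (he.mem_iff _ _).mp (hd _ _ (he.sub_apply_mem i hx)) i (i : ℕ).lt_succ_self
  rw [map_sub, map_sub, sub_eq_zero] at h
  exact h.symm

lemma apply_diagonalPart (he : SplitsFiltration e F) (i : Fin n) (x : K) :
    e i (diagonalPart e d x) = e i (d (e i x)) :=
  LinearMap.congr_fun (mul_diagonalPart he.toOrthogonalIdempotents d i) x

theorem sub_diagonalPart_mem (he : SplitsFiltration e F) (hd : ∀ j, ∀ x ∈ F j, d x ∈ F j)
    {j : ℕ} {x : K} (hx : x ∈ F j) :
    d x - diagonalPart e d x ∈ F (j + 1) := by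
  refine (he.mem_iff _ _).mpr fun i hi ↦ ?_
  have hxi : x ∈ F i := he.antitone (Nat.lt_succ_iff.mp hi) hx
  rw [map_sub, he.apply_diagonalPart, he.apply_map_apply hd i hxi, sub_self]

theorem diagonalPart_mul_self (he : SplitsFiltration e F) (hd : ∀ j, ∀ x ∈ F j, d x ∈ F j)
    (hdd : ∀ j, ∀ x ∈ F j, d (d x) ∈ F (j + 1)) : diagonalPart e d * diagonalPart e d = 0 := by
  have block (i : Fin n) (x : K) : e i (diagonalPart e d (diagonalPart e d x)) = 0 := by
    rw [he.apply_diagonalPart, he.apply_diagonalPart,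
      he.apply_map_apply hd i (hd _ _ (he.apply_mem i x))]
    exact (he.mem_iff _ _).mp (hdd _ _ (he.apply_mem i x)) i (i : ℕ).lt_succ_self
  ext x
  rw [Module.End.mul_apply, LinearMap.zero_apply,
    ← sum_apply_eq_self he.toCompleteOrthogonalIdempotents (diagonalPart e d _)]
  exact Finset.sum_eq_zero fun i _ ↦ block i x

theorem mem_iff_map_mem (he : SplitsFiltration e F) (hcomm : ∀ i, Commute (e i) d)
    {T : Submodule R K} (hT : ∀ i, ∀ x ∈ T, e i x ∈ T) (hdisj : Disjoint (LinearMap.ker d) T)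
    {x : K} (hx : x ∈ T) (j : ℕ) : x ∈ F j ↔ d x ∈ F j := by
  have comm_apply (i : Fin n) : e i (d x) = d (e i x) := LinearMap.congr_fun (hcomm i) x
  have block (i : Fin n) : e i x = 0 ↔ d (e i x) = 0 :=
    ⟨fun h ↦ by rw [h, map_zero], fun h ↦ Submodule.disjoint_def.mp hdisj _ h (hT i x hx)⟩
  simp only [he.mem_iff, comm_apply, block]

end SplitsFiltration

end Module

theorem statement3_general
    {R K : Type*} [Ring R] [AddCommGroup K] [Module R K] [IsSemisimpleModule R K]
    (S : ℕ) (Kfil : ℕ → Submodule R K) (d : Module.End R K)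
    (hdd : ∀ j, ∀ x ∈ Kfil j, d (d x) ∈ Kfil (j + 1))
    (hK0 : Kfil 0 = ⊤)
    (hmono : ∀ j, Kfil (j + 1) ≤ Kfil j)
    (hbot : Kfil (S + 1) = ⊥)
    (hdK : ∀ j, ∀ x ∈ Kfil j, d x ∈ Kfil j) :
    ∃ (d0 : Module.End R K) (T C : Submodule R K),
      d0 * d0 = 0 ∧
      (∀ j, ∀ x ∈ Kfil j, d x - d0 x ∈ Kfil (j + 1)) ∧
      IsCompl (LinearMap.ker d0) T ∧
      (∀ j, ∀ α ∈ T, (α ∈ Kfil j ↔ d0 α ∈ Kfil j)) ∧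
      IsCompl (LinearMap.range d0) C ∧
      T ≤ C := by
  obtain ⟨e, he⟩ := exists_splitsFiltration (antitone_nat_of_succ_le hmono) hK0 hbot
  set d0 := diagonalPart e d
  have hcomm (i) : Commute (e i) d0 := commute_diagonalPart he.toOrthogonalIdempotents d i
  have d0_sq : d0 * d0 = 0 := he.diagonalPart_mul_self hdK hdd
  obtain ⟨T, hT, T_invariant⟩ :=
    exists_isCompl_forall_apply_mem he.toCompleteOrthogonalIdempotents
      fun i ↦ apply_mem_ker_of_commute (hcomm i)
  have range_le_ker : LinearMap.range d0 ≤ LinearMap.ker d0 :=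
    LinearMap.range_le_ker_iff.mpr d0_sq
  obtain ⟨C, hTC, hC⟩ := (hT.disjoint.mono_left range_le_ker).symm.exists_isCompl
  exact ⟨d0, T, C, d0_sq, fun _ _ ↦ he.sub_diagonalPart_mem hdK, hT,
    fun j _ hα ↦ he.mem_iff_map_mem hcomm T_invariant hT.disjoint hα j, hC.symm, hTC⟩

theorem statement3
    {𝕜 K : Type*} [Field 𝕜] [AddCommGroup K] [Module 𝕜 K]
    (S : ℕ) (Kfil : ℕ → Submodule 𝕜 K) (d : Module.End 𝕜 K)
    (hdd : d * d = 0)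
    (hK0 : Kfil 0 = ⊤)
    (hmono : ∀ j, Kfil (j + 1) ≤ Kfil j)
    (hbot : Kfil (S + 1) = ⊥)
    (hdK : ∀ j, ∀ x ∈ Kfil j, d x ∈ Kfil j)
    :
    ∃ (d0 : Module.End 𝕜 K) (T C : Submodule 𝕜 K),
      d0 * d0 = 0 ∧
      (∀ j, ∀ x ∈ Kfil j, d x - d0 x ∈ Kfil (j + 1)) ∧
      IsCompl (LinearMap.ker d0) T ∧
      (∀ j, ∀ α ∈ T, (α ∈ Kfil j ↔ d0 α ∈ Kfil j)) ∧
      IsCompl (LinearMap.range d0) C ∧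
      T ≤ C := by
  have d_d (x : K) : d (d x) = 0 := LinearMap.congr_fun hdd x
  exact statement3_general S Kfil d (fun j x _ ↦ by simp only [d_d, zero_mem]) hK0 hmono hbot hdK
end
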